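/- Let R₁, …, R_ℓ ⊆ ℕ × ℕ be strictly monotone relations and suppose (m,n) ∈ ↓→R₁ ⋯ ↓→R_ℓ and (m',n') ∈ ↓←R₁ ⋯ ↓←R_ℓ (compositions of weak forward, respectively weak backward, relations). If n' ≤ n, then m' ≤ m. -/

import Mathlib

/-- The weak forward relation: `(m,n)` is related if some `n' ≥ n` has `(m,n') ∈ R`. -/
def WeakFwd (R : ℕ → ℕ → Prop) (m n : ℕ) : Prop := ∃ n' ≥ n, R m n'

/-- The weak backward relation: `(m,n)` is related if some `m' ≥ m` has `(m',n) ∈ R`. -/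
def WeakBwd (R : ℕ → ℕ → Prop) (m n : ℕ) : Prop := ∃ m' ≥ m, R m' n

/-- `R` is strictly monotone: for `(m,n), (m',n') ∈ R`, `m < m'` iff `n < n'`. -/
def StrictlyMonotoneRel (R : ℕ → ℕ → Prop) : Prop :=
  ∀ m n m' n', R m n → R m' n' → (m < m' ↔ n < n')

/-- Composition of a finite sequence of relations. -/
def CompList : List (ℕ → ℕ → Prop) → ℕ → ℕ → Prop
  | [] => fun m n => m = n
  | R :: Rs => fun m n => ∃ k, R m k ∧ CompList Rs k n

/-!
Strict monotonicity of `R` on a linear order says, contrapositively, that `R m n`, `R m' n'` and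
`n' ≤ n` imply `m' ≤ m`. As a property of the pair `(R, R)` this survives lowering the target of the
first relation and the source of the second, since both only lengthen the chains `n' ≤ n` and
`m' ≤ m`; and it propagates from right to left through compositions of such pairs.
-/

/-- The pair of relations `(r, s)` reflects the order: targets in order force sources in order. Two
relations appear because a weak forward relation is to be compared with a weak backward one. -/
def ReflectsLE {α β : Type*} [LE α] [LE β] (r s : α → β → Prop) : Prop :=
  ∀ ⦃a b a' b'⦄, r a b → s a' b' → b' ≤ b → a' ≤ a

namespace ReflectsLE

theorem eq_eq {α : Type*} [LE α] : ReflectsLE (α := α) Eq Eq := by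
  rintro a _ a' _ rfl rfl hle
  exact hle

theorem comp {α β γ : Type*} [LE α] [LE β] [LE γ] {r₁ s₁ : α → β → Prop} {r₂ s₂ : β → γ → Prop}
    (h₁ : ReflectsLE r₁ s₁) (h₂ : ReflectsLE r₂ s₂) :
    ReflectsLE (Relation.Comp r₁ r₂) (Relation.Comp s₁ s₂) := by
  rintro a c a' c' ⟨b, hab, hbc⟩ ⟨b', hab', hbc'⟩ hle
  exact h₁ hab hab' (h₂ hbc hbc' hle)

theorem comp_ge_le_comp {α β : Type*} [Preorder α] [Preorder β] {r s : α → β → Prop}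
    (h : ReflectsLE r s) : ReflectsLE (Relation.Comp r (· ≥ ·)) (Relation.Comp (· ≤ ·) s) := by
  rintro a b a' b' ⟨c, hac, hbc⟩ ⟨d, had, hdb⟩ hle
  exact had.trans (h hac hdb (hle.trans hbc))

theorem foldr_comp {α : Type*} [LE α] {rs ss : List (α → α → Prop)}
    (h : List.Forall₂ ReflectsLE rs ss) :
    ReflectsLE (rs.foldr Relation.Comp Eq) (ss.foldr Relation.Comp Eq) := by
  induction h with
  | nil => exact eq_eq
  | cons hhead _ ih => exact hhead.comp ih

end ReflectsLE

theorem StrictlyMonotoneRel.reflectsLE {R : ℕ → ℕ → Prop} (hR : StrictlyMonotoneRel R) :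
    ReflectsLE R R :=
  fun m n m' n' h h' hle => le_of_not_gt fun hlt => hle.not_gt ((hR m n m' n' h h').1 hlt)

theorem weakFwd_eq_comp_ge (R : ℕ → ℕ → Prop) : WeakFwd R = Relation.Comp R (· ≥ ·) := by
  ext m n
  exact exists_congr fun _ => and_comm

theorem weakBwd_eq_le_comp (R : ℕ → ℕ → Prop) : WeakBwd R = Relation.Comp (· ≤ ·) R :=
  rfl

theorem compList_eq_foldr_comp : CompList = List.foldr Relation.Comp Eq := by
  ext Rs : 1
  induction Rs with
  | nil => rfl
  | cons R Rs ih => rw [List.foldr_cons, ← ih]; rfl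

theorem weakFwd_weakBwd_le_general {α : Type*} [Preorder α] (Rs : List (α → α → Prop))
    (hRs : ∀ R ∈ Rs, ReflectsLE R R) {a b a' b' : α}
    (hfwd : (Rs.map fun R => Relation.Comp R (· ≥ ·)).foldr Relation.Comp Eq a b)
    (hbwd : (Rs.map fun R => Relation.Comp (· ≤ ·) R).foldr Relation.Comp Eq a' b')
    (hle : b' ≤ b) : a' ≤ a := by
  refine ReflectsLE.foldr_comp ?_ hfwd hbwd hle
  rw [List.forall₂_map_left_iff, List.forall₂_map_right_iff, List.forall₂_same]
  exact fun R hR => (hRs R hR).comp_ge_le_comp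

theorem weakFwd_weakBwd_le (Rs : List (ℕ → ℕ → Prop))
    (hmono : ∀ R ∈ Rs, StrictlyMonotoneRel R) (m n m' n' : ℕ)
    (hfwd : CompList (Rs.map WeakFwd) m n)
    (hbwd : CompList (Rs.map WeakBwd) m' n')
    (hle : n' ≤ n) : m' ≤ m := by
  simp only [compList_eq_foldr_comp, funext weakFwd_eq_comp_ge, funext weakBwd_eq_le_comp]
    at hfwd hbwd
  exact weakFwd_weakBwd_le_general Rs (fun R hR => (hmono R hR).reflectsLE) hfwd hbwd hle
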